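/- arXiv:2509.15438 — 2 statements merged into one kernel-verified Lean document; each statement's English description precedes it below -/
import Mathlib

section
/- Let k be an algebraically closed field, A a finitely generated integral domain over k with a 𝔾ₐ-coaction β, and b(t) ∈ k[t] a nonzero additive polynomial. If for every f ∈ A the element β(f) − f lies in the ideal of A[t] generated by b(t), then β factors through b(t): for every a ∈ A there exists a polynomial P ∈ A[s] such that β(a) = P(b(t)), i.e. β(A) ⊆ A[b(t)]. -/
open Polynomial

/-- Substitute `t ↦ t₁ + t₂` into a polynomial, landing in `R[t₁][t₂]`
(inner variable `t₁`, outer variable `t₂`). -/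
noncomputable def coaddSubst {R : Type*} [CommSemiring R] (p : Polynomial R) :
    Polynomial (Polynomial R) :=
  p.eval₂ ((Polynomial.C : Polynomial R →+* Polynomial (Polynomial R)).comp
      (Polynomial.C : R →+* Polynomial R))
    (Polynomial.C Polynomial.X + Polynomial.X)

/-- A 𝔾ₐ-coaction on a commutative `k`-algebra `A`: a `k`-algebra homomorphism
`β : A → A[t]` satisfying the counit and coassociativity axioms. -/
def IsGaCoaction {k A : Type*} [CommSemiring k] [CommSemiring A] [Algebra k A]
    (β : A →ₐ[k] Polynomial A) : Prop :=
  (∀ a : A, (β a).eval 0 = a) ∧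
  (∀ a : A, coaddSubst (β a) = (β a).map β.toRingHom)

/-- `c(t) ∈ k[t]` is additive: `c(t₁+t₂) = c(t₁) + c(t₂)` in `k[t₁][t₂]`. -/
def IsAdditivePoly {k : Type*} [CommSemiring k] (c : Polynomial k) : Prop :=
  coaddSubst c = Polynomial.C c + c.map (Polynomial.C : k →+* Polynomial k)

theorem coaddSubst_map {R S : Type*} [CommRing R] [CommRing S] (χ : Polynomial R →+* S)
    (p : Polynomial R) :
    (coaddSubst p).map χ = taylor (χ X) (p.map (χ.comp C)) := by
  unfold coaddSubst
  rw [taylor_apply, comp, eval₂_map, ← coe_mapRingHom, hom_eval₂]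
  congr 1
  · ext; simp
  · simp [add_comm]

theorem key_lemma {A S : Type*} [CommRing A] [CommRing S] [Nontrivial A] [Nontrivial S]
    (ι : A →+* S) (x : S) (B : Polynomial A) (hm : B.Monic) (hd : 0 < B.natDegree)
    (hB : taylor x (B.map ι) = B.map ι)
    (hker : ∀ r : Polynomial A, r.eval₂ ι x = 0 → B ∣ r) :
    ∀ (n : ℕ) (p : Polynomial A), p.natDegree ≤ n → taylor x (p.map ι) = p.map ι →
      ∃ P : Polynomial A, p = P.comp B := by
  have hdeg : 0 < B.degree := natDegree_pos_iff_degree_pos.mp hd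
  have hconst : ∀ r : Polynomial A, r.degree < B.degree → taylor x (r.map ι) = r.map ι →
      r = C (r.eval 0) := by
    intro r hr h
    have h1 := congrArg (eval 0) h
    rw [taylor_eval, zero_add, eval_map, eval_map] at h1
    have h2 : B ∣ r - C (r.eval 0) := by
      apply hker
      rw [eval₂_sub, h1, eval₂_C, eval₂_at_zero, coeff_zero_eq_eval_zero, sub_self]
    have h3 : r - C (r.eval 0) = 0 := by
      by_contra hne
      refine hm.not_dvd_of_degree_lt hne ?_ h2
      refine lt_of_le_of_lt (degree_sub_le _ _) (max_lt hr ?_)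
      exact lt_of_le_of_lt degree_C_le hdeg
    exact sub_eq_zero.mp h3
  have hstep : ∀ p : Polynomial A, taylor x (p.map ι) = p.map ι →
      taylor x ((p /ₘ B).map ι) = (p /ₘ B).map ι ∧ taylor x ((p %ₘ B).map ι) = (p %ₘ B).map ι := by
    intro p hp
    have e := modByMonic_add_div p B
    have e1 : (p %ₘ B).map ι + B.map ι * (p /ₘ B).map ι = p.map ι := by
      rw [← Polynomial.map_mul, ← Polynomial.map_add, e]
    have hl : ((p %ₘ B).map ι).degree < (B.map ι).degree := by
      rw [hm.degree_map ι]
      exact lt_of_le_of_lt degree_map_le (degree_modByMonic_lt p hm)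
    have e2 : taylor x ((p %ₘ B).map ι) + B.map ι * taylor x ((p /ₘ B).map ι) = p.map ι := by
      have := congrArg (taylor x) e1
      rwa [map_add, taylor_mul, hB, hp] at this
    obtain ⟨u1, u2⟩ := div_modByMonic_unique _ _ (hm.map ι) ⟨e1, hl⟩
    obtain ⟨v1, v2⟩ := div_modByMonic_unique _ _ (hm.map ι) ⟨e2, by rwa [degree_taylor]⟩
    exact ⟨v1.symm.trans u1, v2.symm.trans u2⟩
  intro n
  induction n with
  | zero =>
    intro p hp _
    exact ⟨p, by rw [eq_C_of_natDegree_le_zero hp, C_comp]⟩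
  | succ n ih =>
    intro p hp h
    obtain ⟨h1, h2⟩ := hstep p h
    obtain ⟨Q, hQ⟩ := ih (p /ₘ B) (by rw [natDegree_divByMonic p hm]; omega) h1
    have h3 := hconst _ (degree_modByMonic_lt p hm) h2
    refine ⟨C ((p %ₘ B).eval 0) + X * Q, ?_⟩
    rw [add_comp, mul_comp, C_comp, X_comp, ← hQ, ← h3, modByMonic_add_div]

/-- if `β(f) − f ∈ ⟨b(t)⟩` for every `f ∈ A`, where `b(t)` is a
nonzero additive polynomial, then `β` factors through `b(t)`: `β(A) ⊆ A[b(t)]`. -/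
theorem stmt2 {k : Type*} [Field k] [IsAlgClosed k]
    {A : Type*} [CommRing A] [IsDomain A] [Algebra k A]
    (hfg : Algebra.FiniteType k A)
    (β : A →ₐ[k] Polynomial A) (hβ : IsGaCoaction β)
    (b : Polynomial k) (hb : IsAdditivePoly b) (hb0 : b ≠ 0)
    (hmem : ∀ f : A, β f - Polynomial.C f ∈
      Ideal.span {b.map (algebraMap k A)}) :
    ∀ a : A, ∃ P : Polynomial A, β a = P.comp (b.map (algebraMap k A)) := by
  intro a
  obtain ⟨hβ0, hβ1⟩ := hβ
  have hinj : Function.Injective (algebraMap k A) := (algebraMap k A).injective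
  have hd : 0 < b.natDegree := by
    by_contra hcon
    have hc : b = C (b.coeff 0) := eq_C_of_natDegree_le_zero (by omega)
    rw [hc] at hb
    unfold IsAdditivePoly coaddSubst at hb
    have h := congrArg (fun q => eval 0 (eval 0 q)) hb
    simp at h
    exact hb0 (by rw [hc, h, C_0])
  set B : Polynomial A := b.map (algebraMap k A) with hBdef
  have hBd : B.natDegree = b.natDegree := natDegree_map_eq_of_injective hinj b
  have hBdeg : B.degree ≠ 0 := by
    have : 0 < B.degree := natDegree_pos_iff_degree_pos.mp (by omega)
    exact this.ne'
  have : Nontrivial (AdjoinRoot B) := by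
    refine Ideal.Quotient.nontrivial_iff.mpr ?_
    rw [Ne, Ideal.span_singleton_eq_top]
    exact fun hu => hBdeg (degree_eq_zero_of_isUnit hu)
  have hlc : b.leadingCoeff ≠ 0 := leadingCoeff_ne_zero.mpr hb0
  set c : k := b.leadingCoeff⁻¹ with hc
  have hc0 : c ≠ 0 := inv_ne_zero hlc
  set B' : Polynomial A := (b * C c).map (algebraMap k A) with hB'
  have hB'B : B' = B * C (algebraMap k A c) := by rw [hB', Polynomial.map_mul, map_C]
  have hB'm : B'.Monic := (monic_mul_leadingCoeff_inv hb0).map _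
  have hB'd : 0 < B'.natDegree := by
    rw [hB', natDegree_map_eq_of_injective hinj, natDegree_mul_C hc0]; exact hd
  have hcu : IsUnit (C (algebraMap k A c)) :=
    ((isUnit_iff_ne_zero.mpr hc0).map (algebraMap k A)).map C
  have htB : taylor (AdjoinRoot.root B) (B.map (AdjoinRoot.of B)) = B.map (AdjoinRoot.of B) := by
    have h := congrArg (Polynomial.map
      ((AdjoinRoot.mk B).comp (mapRingHom (algebraMap k A)))) hb
    rw [coaddSubst_map, Polynomial.map_add, map_C, Polynomial.map_map] at h
    have e1 : ((AdjoinRoot.mk B).comp (mapRingHom (algebraMap k A))).comp C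
        = (AdjoinRoot.of B).comp (algebraMap k A) := by
      ext z; simp
    have e2 : ((AdjoinRoot.mk B).comp (mapRingHom (algebraMap k A))) b = 0 := by
      simp [← hBdef]
    have e3 : ((AdjoinRoot.mk B).comp (mapRingHom (algebraMap k A))) X = AdjoinRoot.root B := by
      simp
    rw [e1, e2, e3, C_0, zero_add, ← Polynomial.map_map] at h
    exact h
  have htB' : taylor (AdjoinRoot.root B) (B'.map (AdjoinRoot.of B))
      = B'.map (AdjoinRoot.of B) := by
    rw [hB'B, Polynomial.map_mul, taylor_mul, htB, map_C, taylor_C]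
  have hker : ∀ r : Polynomial A, r.eval₂ (AdjoinRoot.of B) (AdjoinRoot.root B) = 0 → B' ∣ r := by
    intro r hr
    have h1 : AdjoinRoot.mk B r = 0 := by
      rw [← hr, ← AdjoinRoot.aeval_eq]; rfl
    rw [hB'B, hcu.mul_right_dvd]
    exact AdjoinRoot.mk_eq_zero.mp h1
  have hp : taylor (AdjoinRoot.root B) ((β a).map (AdjoinRoot.of B))
      = (β a).map (AdjoinRoot.of B) := by
    have h := congrArg (Polynomial.map (AdjoinRoot.mk B)) (hβ1 a)
    rw [coaddSubst_map, Polynomial.map_map] at h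
    have e : (AdjoinRoot.mk B).comp β.toRingHom = AdjoinRoot.of B := by
      ext f
      have := AdjoinRoot.mk_eq_mk.mpr (Ideal.mem_span_singleton.mp (hmem f))
      exact this
    rw [e] at h
    exact h
  obtain ⟨P, hP⟩ := key_lemma (AdjoinRoot.of B) (AdjoinRoot.root B) B' hB'm hB'd htB' hker
    _ (β a) le_rfl hp
  refine ⟨P.comp (X * C (algebraMap k A c)), ?_⟩
  rw [hP, comp_assoc, mul_comp, X_comp, C_comp, hB'B]
end

section
/- Let k be a field, A an integral domain over k with a 𝔾ₐ-coaction β, b(t) a nonzero additive polynomial, and (g,h) a b(t)-pair with h ≠ 0. Define a k-algebra homomorphism ψ : A_h[s] → A_h[s][t] by letting ψ agree with β_h on A_h and setting ψ(s) = s − t. Then ψ is a 𝔾ₐ-coaction on A_h[s], and the element b(s) + g/h is ψ-invariant: ψ(b(s) + g/h) is the constant polynomial b(s) + g/h. -/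
open Polynomial

theorem additive_aeval {k R : Type*} [CommSemiring k] [CommSemiring R] [Algebra k R]
    (b : Polynomial k) (hb : IsAdditivePoly b) (x y : R) :
    aeval (x + y) b = aeval x b + aeval y b := by
  have h := congrArg (Polynomial.eval₂RingHom (aeval (R := k) x).toRingHom y) hb
  unfold coaddSubst at h
  rw [Polynomial.hom_eval₂] at h
  simp only [map_add, coe_eval₂RingHom, eval₂_C, eval₂_X, eval₂_map] at h
  have e1 : ((aeval (R := k) x).toRingHom.comp C) = algebraMap k R := by
    ext z; simp
  have e2 : ((eval₂RingHom (aeval (R := k) x).toRingHom y).comp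
      ((C : Polynomial k →+* _).comp (C : k →+* _))) = algebraMap k R := by
    ext z; simp
  rw [e1, e2] at h
  simpa [aeval_def] using h

theorem coaddSubst_map_s16 {R T : Type*} [CommSemiring R] [CommSemiring T] (f : R →+* T)
    (p : Polynomial R) :
    coaddSubst (p.map f) = (coaddSubst p).map (mapRingHom f) := by
  unfold coaddSubst
  rw [← coe_mapRingHom (mapRingHom f), Polynomial.hom_eval₂, eval₂_map]
  congr 1
  · ext z : 1
    simp
  · simp

/-- given a `b(t)`-pair `(g,h)` with `h ≠ 0`, the map
`ψ : A_h[s] → A_h[s][t]` agreeing with `β_h` on `A_h` and with `ψ(s) = s − t`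
is a 𝔾ₐ-coaction on `A_h[s]`, and `b(s) + g/h` is `ψ`-invariant.
Here `A_h = S`, the variable `s` is the variable of `Polynomial S`, and `t` is
the (outer) coaction variable. -/
theorem stmt16 {k : Type*} [Field k]
    {A : Type*} [CommRing A] [IsDomain A] [Algebra k A]
    (β : A →ₐ[k] Polynomial A) (hβ : IsGaCoaction β)
    (b : Polynomial k) (hb : IsAdditivePoly b) (hb0 : b ≠ 0)
    (g h : A) (hh0 : h ≠ 0)
    (hinv : β h = Polynomial.C h)
    (hpair : β g = Polynomial.C g + b.map (algebraMap k A) * Polynomial.C h)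
    (S : Type*) [CommRing S] [Algebra A S] [Algebra k S] [IsScalarTower k A S]
    [IsLocalization.Away h S]
    (βS : S →ₐ[k] Polynomial S) (hβS : IsGaCoaction βS)
    (hext : ∀ a : A, βS (algebraMap A S a) = (β a).map (algebraMap A S))
    (ψ : Polynomial S →ₐ[k] Polynomial (Polynomial S))
    (hψC : ∀ x : S, ψ (Polynomial.C x) =
      (βS x).map (Polynomial.C : S →+* Polynomial S))
    (hψX : ψ Polynomial.X = Polynomial.C Polynomial.X - Polynomial.X) :
    IsGaCoaction ψ ∧
    ψ (b.map (algebraMap k S) +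
        Polynomial.C (IsLocalization.mk' S g ⟨h, Submonoid.mem_powers h⟩)) =
      Polynomial.C (b.map (algebraMap k S) +
        Polynomial.C (IsLocalization.mk' S g ⟨h, Submonoid.mem_powers h⟩)) := by
  have hC : ψ.toRingHom.comp (C : S →+* Polynomial S)
      = (mapRingHom (C : S →+* Polynomial S)).comp βS.toRingHom := by
    ext1 x
    exact hψC x
  refine ⟨⟨?_, ?_⟩, ?_⟩
  · have key : (evalRingHom (0 : Polynomial S)).comp ψ.toRingHom = RingHom.id _ := by
      apply Polynomial.ringHom_ext
      · intro x
        have h1 : eval (0 : Polynomial S) (ψ (C x)) = C x := by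
          rw [hψC, ← C_0, eval_map_apply, hβS.1]
        exact h1
      · have h1 : eval (0 : Polynomial S) (ψ X) = X := by simp [hψX]
        exact h1
    intro a
    exact RingHom.congr_fun key a
  · have key : (eval₂RingHom ((C : Polynomial (Polynomial S) →+* Polynomial (Polynomial (Polynomial S))).comp
          (C : Polynomial S →+* Polynomial (Polynomial S)))
          (C X + X : Polynomial (Polynomial (Polynomial S)))).comp ψ.toRingHom
        = (mapRingHom ψ.toRingHom).comp ψ.toRingHom := by
      apply Polynomial.ringHom_ext
      · intro x
        have h1 : coaddSubst (ψ (C x)) = (ψ (C x)).map ψ.toRingHom := by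
          rw [hψC, coaddSubst_map_s16, hβS.2, Polynomial.map_map, Polynomial.map_map, hC]
        exact h1
      · have h2 : ψ.toRingHom X = C X - X := hψX
        simp only [RingHom.comp_apply, h2, map_sub, coe_mapRingHom, map_C, map_X,
          coe_eval₂RingHom, eval₂_C, eval₂_X]
        ring
    intro a
    exact RingHom.congr_fun key a
  · set q := IsLocalization.mk' S g ⟨h, Submonoid.mem_powers h⟩ with hq
    have hqh : q * algebraMap A S h = algebraMap A S g :=
      IsLocalization.mk'_spec S g ⟨h, Submonoid.mem_powers h⟩
    have hu : IsUnit (C (algebraMap A S h)) :=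
      (IsLocalization.Away.algebraMap_isUnit h).map C
    have hβq : βS q = C q + b.map (algebraMap k S) := by
      apply hu.mul_right_cancel
      have h1 := congrArg βS hqh
      rw [map_mul, hext, hext, hinv, hpair, map_C] at h1
      rw [h1, add_mul, ← C_mul, hqh, IsScalarTower.algebraMap_eq k A S, ← Polynomial.map_map]
      simp
    have hbX : ∀ (p : Polynomial k), p.map (algebraMap k S) = aeval (X : Polynomial S) p := by
      intro p
      rw [← aeval_map_algebraMap S, aeval_X_left_apply]
    rw [map_add, hψC, hβq, hbX, ← aeval_algHom_apply, hψX]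
    have h1 := additive_aeval b hb (C X - X : Polynomial (Polynomial S)) X
    rw [sub_add_cancel] at h1
    have h2 : aeval (C X : Polynomial (Polynomial S)) b = C (aeval (X : Polynomial S) b) := by
      have := aeval_algebraMap_apply (Polynomial (Polynomial S)) (X : Polynomial S) b
      exact this
    have h3 : (aeval (X : Polynomial S) b).map (C : S →+* Polynomial S)
        = aeval (X : Polynomial (Polynomial S)) b := by
      rw [← hbX, Polynomial.map_map, ← aeval_map_algebraMap (Polynomial S), aeval_X_left_apply]
      rfl
    rw [Polynomial.map_add, h3, map_C, C_add, ← h2, h1]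
    ring
end
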